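/- arXiv:1403.7881 — 3 statements merged into one kernel-verified Lean document; each statement's English description precedes it below -/
import Mathlib

section
/- Let G be a numeration system with coefficients a_0 ≥ a_1 ≥ … ≥ a_{d−1} ≥ 1, irreducible characteristic polynomial and Pisot characteristic root β. Then the image ψ_β(ℕ) of the positive integers under the extended β-adic Monna map is a dense subset of [0,1). -/
open scoped BigOperators
open scoped Classical

/-- A numeration system `G = (G_n)` defined by a linear recurrence with
nonincreasing positive coefficients `a_0 ≥ a_1 ≥ … ≥ a_{d-1} ≥ 1`, together with
the regular (greedy) digit expansion `dig n k = ε_k(n)` of every nonnegative integer. -/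
structure NumerationSystem where
  d : ℕ
  hd : 1 ≤ d
  a : ℕ → ℕ
  ha_anti : ∀ i j, i ≤ j → j < d → a j ≤ a i
  ha_pos : ∀ i, i < d → 1 ≤ a i
  G : ℕ → ℕ
  hG0 : G 0 = 1
  hG_small : ∀ k, 0 < k → k < d → G k = (∑ i ∈ Finset.range k, a i * G (k - 1 - i)) + 1
  hG_rec : ∀ n : ℕ, G (n + d) = ∑ i ∈ Finset.range d, a i * G (n + d - 1 - i)
  dig : ℕ → ℕ → ℕ
  hdig_fin : ∀ n : ℕ, ∃ K, (∀ k, K ≤ k → dig n k = 0) ∧ n = ∑ k ∈ Finset.range K, dig n k * G k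
  hdig_reg : ∀ n K, ∑ k ∈ Finset.range K, dig n k * G k < G K

namespace NumerationSystem

/-- The characteristic polynomial `X^d - a_0 X^{d-1} - … - a_{d-1}` of the numeration system. -/
noncomputable def charPoly (S : NumerationSystem) : Polynomial ℤ :=
  Polynomial.X ^ S.d -
    ∑ i ∈ Finset.range S.d, Polynomial.C (S.a i : ℤ) * Polynomial.X ^ (S.d - 1 - i)

/-- `β` is the characteristic root of `S`: the characteristic polynomial is irreducible,
`β` is a root, `β > 1`, and every other complex root has modulus `< 1` (so `β` is Pisot). -/
def IsCharRoot (S : NumerationSystem) (β : ℝ) : Prop :=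
  Irreducible (S.charPoly.map (Int.castRingHom ℚ)) ∧
  (Polynomial.aeval β) S.charPoly = 0 ∧ 1 < β ∧
  ∀ z : ℂ, (Polynomial.aeval z) S.charPoly = 0 → z ≠ (β : ℂ) → ‖z‖ < 1

/-- `F_{K,r}` : the number of `n < G (K+r)` whose regular expansion starts with the word `w`. -/
noncomputable def F (S : NumerationSystem) (w : ℕ → ℕ) (K r : ℕ) : ℕ :=
  ((Finset.range (S.G (K + r))).filter (fun n => ∀ i, i < K → S.dig n i = w i)).card

/-- The measure `μ` of the cylinder set given by the word `w` of length `K`. -/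
noncomputable def mu (S : NumerationSystem) (β : ℝ) (w : ℕ → ℕ) (K : ℕ) : ℝ :=
  (∑ j ∈ Finset.range S.d,
      ((S.F w K j : ℝ) - ∑ i ∈ Finset.range j, (S.a i : ℝ) * (S.F w K (j - 1 - i) : ℝ))
        * β ^ (S.d - 1 - j)) /
    (β ^ K * ∑ i ∈ Finset.range S.d, β ^ i)

/-- The extended `β`-adic Monna map on digit sequences:
`ψ_β(x) = ∑_{k ≥ 0} ∑_{i < x_k} μ(Z(x_0,…,x_{k-1},i))`. -/
noncomputable def psiSeq (S : NumerationSystem) (β : ℝ) (x : ℕ → ℕ) : ℝ :=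
  ∑' k : ℕ, ∑ i ∈ Finset.range (x k), S.mu β (fun m => if m < k then x m else i) (k + 1)

/-- The extended `β`-adic Monna map on integers (via the regular `G`-expansion). -/
noncomputable def psi (S : NumerationSystem) (β : ℝ) (n : ℕ) : ℝ :=
  S.psiSeq β (S.dig n)

/-- A digit sequence is regular if all its partial sums satisfy the greedy condition. -/
def RegularSeq (S : NumerationSystem) (x : ℕ → ℕ) : Prop :=
  ∀ K, ∑ k ∈ Finset.range K, x k * S.G k < S.G K

/-- A finite word of length `K` is a regular digit string. -/
def RegularWord (S : NumerationSystem) (w : ℕ → ℕ) (K : ℕ) : Prop :=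
  ∀ K', K' ≤ K → ∑ k ∈ Finset.range K', w k * S.G k < S.G K'

/-- The Galois closure `K = ℚ(β_1,…,β_d)` of `ℚ(β)`, realized inside `ℂ` as the field
generated by all roots of the characteristic polynomial. -/
noncomputable def galoisClosure (S : NumerationSystem) : IntermediateField ℚ ℂ :=
  IntermediateField.adjoin ℚ {z : ℂ | (Polynomial.aeval z) S.charPoly = 0}

/-- `k` is maximal with `a_0 = a_1 = … = a_k`. -/
def IsPlateau (S : NumerationSystem) (k : ℕ) : Prop :=
  k < S.d ∧ (∀ i, i ≤ k → S.a i = S.a 0) ∧ (k + 1 < S.d → S.a (k + 1) ≠ S.a 0)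

/-- `βc 0, …, βc (d-1)` enumerate the (distinct) roots of the characteristic polynomial and
`b` gives the coefficients in the explicit formula `G_n = ∑_j b_j β_j^n`. -/
def IsRootData (S : NumerationSystem) (βc b : ℕ → ℂ) : Prop :=
  (∀ j, j < S.d → (Polynomial.aeval (βc j)) S.charPoly = 0) ∧
  (∀ j j', j < S.d → j' < S.d → βc j = βc j' → j = j') ∧
  ∀ n : ℕ, (S.G n : ℂ) = ∑ j ∈ Finset.range S.d, b j * βc j ^ n

end NumerationSystem

/-- The maximal digit pattern: `ε_i = a_0` if `(k+1) ∤ i` or `i = 0`, and `ε_i = a_0 - 1`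
otherwise. -/
def maxPattern (a0 k i : ℕ) : ℕ :=
  if (k + 1) ∣ i ∧ i ≠ 0 then a0 - 1 else a0

/-- The constant `A = 1 + ∑_j a_0 b_j/(1-β_j) - ∑_j b_j/(1-β_j^{k+1})` from the corner
analysis (for a corner coordinate equal to 1). -/
noncomputable def cornerA (S : NumerationSystem) (βc b : ℕ → ℂ) (k : ℕ) : ℂ :=
  1 + ∑ j ∈ Finset.range S.d, (S.a 0 : ℂ) * b j / (1 - βc j)
    - ∑ j ∈ Finset.range S.d, b j / (1 - βc j ^ (k + 1))

/-- The coefficient `c_j^{(i)} = ∑_{m ≥ 0} b_j ε_{n_0+m}(N) β_j^m` (corner coordinate 0). -/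
noncomputable def cornerC0 (S : NumerationSystem) (βc b : ℕ → ℂ) (N n0 j : ℕ) : ℂ :=
  ∑' m : ℕ, (S.dig N (n0 + m) : ℂ) * b j * βc j ^ m

/-- The coefficient `c_j^{(i)}` for a corner coordinate equal to 1. -/
noncomputable def cornerC1 (S : NumerationSystem) (βc b : ℕ → ℂ) (k N n1 j : ℕ) : ℂ :=
  cornerC0 S βc b N n1 j - (S.a 0 : ℂ) * b j / (1 - βc j)
    + b j * βc j ^ ((n1 + k) / (k + 1) * (k + 1) - n1) / (1 - βc j ^ (k + 1))

/-- Lexicographic comparison of words of length `n`, reading the highest digit first: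
`w <_lex w'` iff they differ at some position `m` with `w m < w' m` and agree above `m`. -/
def LexLtBelow (n : ℕ) (w w' : ℕ → ℕ) : Prop :=
  ∃ m, m < n ∧ w m < w' m ∧ ∀ j, m < j → j < n → w j = w' j

/-- The exponent `H` of the corner avoidance theorem. -/
noncomputable def cornerH {s : ℕ} (h : Fin s → ℕ) : ℕ :=
  if ∀ i, h i = 0 then 2 else if ∀ i, h i = 1 then s else 1 + ∑ i, h i

/-- A sequence `(x_n)_{n>0}` in `[0,1)^s` is uniformly distributed modulo 1. -/
def IsUniformlyDistributed {s : ℕ} (x : ℕ → Fin s → ℝ) : Prop :=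
  ∀ a b : Fin s → ℝ, (∀ i, 0 ≤ a i) → (∀ i, a i ≤ b i) → (∀ i, b i ≤ 1) →
    Filter.Tendsto
      (fun N : ℕ =>
        (((Finset.Icc 1 N).filter fun n => ∀ i, a i ≤ x n i ∧ x n i < b i).card : ℝ) / (N : ℝ))
      Filter.atTop (nhds (∏ i, (b i - a i)))

namespace NumerationSystem

lemma G_ge (S : NumerationSystem) (P s : ℕ) (h1 : s ≤ P) (h2 : s ≤ S.d) :
    ∑ t ∈ Finset.range s, S.a t * S.G (P - 1 - t) ≤ S.G P := by
  rcases Nat.eq_zero_or_pos P with h0 | h0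
  · have : s = 0 := by omega
    subst this; simp
  rcases lt_or_ge P S.d with h | h
  · rw [S.hG_small P h0 h]
    refine le_trans (Finset.sum_le_sum_of_subset (Finset.range_subset_range.2 h1)) (Nat.le_succ _)
  · obtain ⟨n, rfl⟩ := Nat.exists_eq_add_of_le' h
    rw [S.hG_rec n]
    exact Finset.sum_le_sum_of_subset (Finset.range_subset_range.2 h2)

lemma G_succ_le' (S : NumerationSystem) (k : ℕ) : S.G k ≤ S.G (k + 1) := by
  have h := S.G_ge (k + 1) 1 (by omega) S.hd
  have h1 := S.ha_pos 0 S.hd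
  simp at h
  nlinarith

lemma G_mono (S : NumerationSystem) : Monotone S.G := monotone_nat_of_le_succ S.G_succ_le'

lemma G_pos (S : NumerationSystem) (k : ℕ) : 0 < S.G k := by
  have := S.G_mono (Nat.zero_le k)
  rw [S.hG0] at this; omega

/-- digit bound -/
noncomputable def M (S : NumerationSystem) : ℕ := (∑ i ∈ Finset.range S.d, S.a i) + 1

lemma G_succ_le (S : NumerationSystem) (k : ℕ) : S.G (k + 1) ≤ S.M * S.G k := by
  unfold M
  rw [add_mul, Finset.sum_mul, one_mul]
  have key : ∀ t, S.a t * S.G (k + 1 - 1 - t) ≤ S.a t * S.G k := fun t =>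
    Nat.mul_le_mul_left _ (S.G_mono (by omega))
  rcases lt_or_ge (k + 1) S.d with h | h
  · rw [S.hG_small (k + 1) (by omega) h]
    refine add_le_add ?_ (S.G_pos k)
    refine (Finset.sum_le_sum fun t _ => key t).trans ?_
    exact Finset.sum_le_sum_of_subset (Finset.range_subset_range.2 h.le)
  · obtain ⟨n, hn⟩ := Nat.exists_eq_add_of_le' h
    have := S.hG_rec n
    rw [← hn] at this
    rw [this]
    exact (Finset.sum_le_sum fun t _ => key t).trans (Nat.le_add_right _ _)

lemma dig_lt (S : NumerationSystem) (n k : ℕ) : S.dig n k < S.M := by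
  have h := S.hdig_reg n (k + 1)
  rw [Finset.sum_range_succ] at h
  have h2 := S.G_succ_le k
  have : S.dig n k * S.G k < S.M * S.G k := by omega
  exact lt_of_mul_lt_mul_right this (Nat.zero_le _)

lemma eq_sum (S : NumerationSystem) {n N : ℕ} (h : n < S.G N) :
    n = ∑ k ∈ Finset.range N, S.dig n k * S.G k := by
  obtain ⟨K, h0, hs⟩ := S.hdig_fin n
  have hz : ∀ k, N ≤ k → S.dig n k = 0 := by
    intro k hk
    by_contra hne
    have hkK : k < K := by
      by_contra hc
      exact hne (h0 k (by omega))
    have h1 : S.dig n k * S.G k ≤ n := by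
      conv_rhs => rw [hs]
      exact Finset.single_le_sum (f := fun k => S.dig n k * S.G k)
        (fun _ _ => Nat.zero_le _) (Finset.mem_range.2 hkK)
    have h2 := S.G_mono hk
    have h3 : 1 ≤ S.dig n k := Nat.pos_of_ne_zero hne
    nlinarith
  have e1 : ∑ k ∈ Finset.range K, S.dig n k * S.G k
      = ∑ k ∈ Finset.range (max K N), S.dig n k * S.G k := by
    apply Finset.sum_subset (Finset.range_subset_range.2 (le_max_left _ _))
    intro k _ hk
    rw [h0 k (by simpa using hk), zero_mul]
  have e2 : ∑ k ∈ Finset.range N, S.dig n k * S.G k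
      = ∑ k ∈ Finset.range (max K N), S.dig n k * S.G k := by
    apply Finset.sum_subset (Finset.range_subset_range.2 (le_max_right _ _))
    intro k _ hk
    rw [hz k (by simpa using hk), zero_mul]
  rw [e2, ← e1]; exact hs

lemma uniq_step (g c c' r r' : ℕ) (h : r < g) (h' : r' < g)
    (e : r + c * g = r' + c' * g) : r = r' ∧ c = c' := by
  have hg : 0 < g := by omega
  have h1 : (r + c * g) % g = (r' + c' * g) % g := by rw [e]
  rw [Nat.add_mul_mod_self_right, Nat.add_mul_mod_self_right, Nat.mod_eq_of_lt h,
    Nat.mod_eq_of_lt h'] at h1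
  subst h1
  exact ⟨rfl, Nat.eq_of_mul_eq_mul_right hg (by omega)⟩

lemma uniq (S : NumerationSystem) (n m L : ℕ)
    (e : ∑ k ∈ Finset.range L, S.dig n k * S.G k = ∑ k ∈ Finset.range L, S.dig m k * S.G k) :
    ∀ i, i < L → S.dig n i = S.dig m i := by
  induction L with
  | zero => intro i hi; omega
  | succ L ih =>
    rw [Finset.sum_range_succ, Finset.sum_range_succ] at e
    obtain ⟨h1, h2⟩ := uniq_step _ _ _ _ _ (S.hdig_reg n L) (S.hdig_reg m L) e
    intro i hi
    rcases Nat.lt_succ_iff_lt_or_eq.1 hi with h | h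
    · exact ih h1 i h
    · rw [h, h2]

lemma shift (S : NumerationSystem) (c m N : ℕ) (hm : m < S.G N)
    (h : c * S.G N + m < S.G (N + 1)) :
    ∀ i, i < N → S.dig (c * S.G N + m) i = S.dig m i := by
  have e := S.eq_sum h
  rw [Finset.sum_range_succ] at e
  have e' : m + c * S.G N = _ := (add_comm _ _).trans e
  obtain ⟨h1, -⟩ := uniq_step _ _ _ _ _ hm (S.hdig_reg _ N) e'
  apply S.uniq
  rw [← h1]
  exact S.eq_sum hm

/-- prefix predicate -/
def Pre (S : NumerationSystem) (w : ℕ → ℕ) (K n : ℕ) : Prop := ∀ i, i < K → S.dig n i = w i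

/-- counting -/
noncomputable def cnt (S : NumerationSystem) (w : ℕ → ℕ) (K x : ℕ) : ℕ := Nat.count (S.Pre w K) x

lemma F_eq (S : NumerationSystem) (w : ℕ → ℕ) (K r : ℕ) :
    S.F w K r = S.cnt w K (S.G (K + r)) := by
  unfold F cnt
  rw [Nat.count_eq_card_filter_range]
  congr

lemma cnt_step1 (S : NumerationSystem) (w : ℕ → ℕ) (K N c x : ℕ) (hK : K ≤ N)
    (hx : x ≤ S.G N) (h : c * S.G N + x ≤ S.G (N + 1)) :
    S.cnt w K (c * S.G N + x) = S.cnt w K (c * S.G N) + S.cnt w K x := by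
  unfold cnt
  rw [Nat.count_add]
  congr 1
  rw [Nat.count_eq_card_filter_range, Nat.count_eq_card_filter_range]
  congr 1
  apply Finset.filter_congr
  intro m hm
  have hm := Finset.mem_range.1 hm
  have := S.shift c m N (by omega) (by omega)
  unfold Pre
  refine forall₂_congr fun i hi => ?_
  rw [this i (by omega)]

lemma cnt_mul (S : NumerationSystem) (w : ℕ → ℕ) (K N c : ℕ) (hK : K ≤ N)
    (h : c * S.G N ≤ S.G (N + 1)) :
    S.cnt w K (c * S.G N) = c * S.cnt w K (S.G N) := by
  induction c with
  | zero => simp [cnt]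
  | succ c ih =>
    rw [add_mul, one_mul] at h ⊢
    rw [S.cnt_step1 w K N c _ hK le_rfl h, ih (by omega)]
    ring

lemma cnt_sum (S : NumerationSystem) (w : ℕ → ℕ) (K : ℕ) (L : ℕ) :
    ∀ (P : ℕ) (b : ℕ → ℕ), L ≤ S.d → K + L ≤ P + 1 → (∀ s, s < L → b s ≤ S.a s) →
      (∀ s, s + 1 < L → b (s + 1) ≤ b s) →
      S.cnt w K (∑ s ∈ Finset.range L, b s * S.G (P - s)) =
        ∑ s ∈ Finset.range L, b s * S.cnt w K (S.G (P - s)) := by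
  induction L with
  | zero => intros; simp [cnt]
  | succ L ih =>
    intro P b hL hP hb hanti
    have hbound : ∀ (P L : ℕ) (b : ℕ → ℕ), L ≤ S.d → L ≤ P + 1 → (∀ s, s < L → b s ≤ S.a s) →
        ∑ s ∈ Finset.range L, b s * S.G (P - s) ≤ S.G (P + 1) := by
      intro P L b h1 h2 h3
      refine le_trans ?_ (S.G_ge (P + 1) L h2 h1)
      refine Finset.sum_le_sum fun s hs => ?_
      exact Nat.mul_le_mul (h3 s (Finset.mem_range.1 hs)) (le_of_eq (by congr 1))
    have hb' : ∀ s, s < L → b (s + 1) ≤ S.a s := fun s hs =>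
      (hanti s (by omega)).trans (hb s (by omega))
    have htot := hbound P (L + 1) b hL (by omega) hb
    rw [Finset.sum_range_succ'] at htot ⊢
    rw [Finset.sum_range_succ']
    simp only [Nat.sub_zero] at htot ⊢
    obtain ⟨Q, hQ⟩ : ∃ Q, Q = P - 1 := ⟨_, rfl⟩
    have e : ∀ s, P - (s + 1) = Q - s := fun s => by omega
    simp only [e] at htot ⊢
    have hx : ∑ s ∈ Finset.range L, b (s + 1) * S.G (Q - s) ≤ S.G P := by
      rcases Nat.eq_zero_or_pos L with h0 | h0
      · subst h0; simp
      · have := hbound Q L (fun s => b (s + 1)) (by omega) (by omega) hb'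
        rwa [show Q + 1 = P by omega] at this
    rw [add_comm] at htot
    rw [add_comm, S.cnt_step1 w K P _ _ (by omega) hx htot, S.cnt_mul w K P _ (by omega) (by omega)]
    rw [add_comm]
    congr 1
    rcases Nat.eq_zero_or_pos L with h0 | h0
    · subst h0; simp [cnt]
    · exact ih Q (fun s => b (s + 1)) (by omega) (by omega) hb'
        (fun s hs => hanti (s + 1) (by omega))

lemma F_rec (S : NumerationSystem) (w : ℕ → ℕ) (K : ℕ) :
    S.F w K S.d = ∑ i ∈ Finset.range S.d, S.a i * S.F w K (S.d - 1 - i) := by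
  have hd := S.hd
  rw [F_eq, S.hG_rec K]
  have := S.cnt_sum w K S.d (K + S.d - 1) S.a le_rfl (by omega) (fun _ _ => le_rfl)
    (fun s hs => S.ha_anti s (s + 1) (by omega) hs)
  rw [this]
  refine Finset.sum_congr rfl fun i hi => ?_
  have hi := Finset.mem_range.1 hi
  rw [F_eq]
  congr 3
  omega

/-- extension of a word -/
def ext (w : ℕ → ℕ) (K i : ℕ) : ℕ → ℕ := fun m => if m < K then w m else i

lemma F_add (S : NumerationSystem) (w : ℕ → ℕ) (K r : ℕ) :
    S.F w K (r + 1) = ∑ i ∈ Finset.range S.M, S.F (ext w K i) (K + 1) r := by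
  unfold F
  rw [Finset.card_eq_sum_card_fiberwise (f := fun n => S.dig n K) (t := Finset.range S.M)]
  · refine Finset.sum_congr rfl fun i _ => ?_
    rw [Finset.filter_filter, show K + (r + 1) = K + 1 + r by ring]
    congr 1
    apply Finset.filter_congr
    intro n _
    constructor
    · rintro ⟨h1, h2⟩ j hj
      unfold ext
      split_ifs with h
      · exact h1 j h
      · rw [show j = K by omega]; exact h2
    · intro h
      refine ⟨fun j hj => ?_, ?_⟩
      · have := h j (by omega)
        simpa [ext, hj] using this
      · have := h K (by omega)
        simpa [ext] using this
  · intro n _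
    simpa using S.dig_lt n K

lemma F_le (S : NumerationSystem) (r : ℕ) : ∀ (w : ℕ → ℕ) (K : ℕ), S.F w K r ≤ S.M ^ r := by
  induction r with
  | zero =>
    intro w K
    unfold F
    rw [pow_zero, Finset.card_le_one]
    intro n hn m hm
    simp only [Finset.mem_filter, Finset.mem_range, add_zero] at hn hm
    rw [S.eq_sum hn.1, S.eq_sum hm.1]
    refine Finset.sum_congr rfl fun i hi => ?_
    rw [hn.2 i (Finset.mem_range.1 hi), hm.2 i (Finset.mem_range.1 hi)]
  | succ r ih =>
    intro w K
    rw [F_add]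
    refine (Finset.sum_le_sum fun i _ => ih _ _).trans ?_
    simp [pow_succ, mul_comm]

/-- coefficient -/
noncomputable def cf (S : NumerationSystem) (w : ℕ → ℕ) (K j : ℕ) : ℝ :=
  (S.F w K j : ℝ) - ∑ i ∈ Finset.range j, (S.a i : ℝ) * (S.F w K (j - 1 - i) : ℝ)

lemma cf_d (S : NumerationSystem) (w : ℕ → ℕ) (K : ℕ) : S.cf w K S.d = 0 := by
  unfold cf
  rw [F_rec]; push_cast; ring

lemma root_eq (S : NumerationSystem) (β : ℝ) (hβ : S.IsCharRoot β) :
    β ^ S.d = ∑ i ∈ Finset.range S.d, (S.a i : ℝ) * β ^ (S.d - 1 - i) := by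
  have := hβ.2.1
  simp [charPoly] at this
  linarith

lemma cf_add (S : NumerationSystem) (w : ℕ → ℕ) (K j : ℕ) :
    ∑ i ∈ Finset.range S.M, S.cf (ext w K i) (K + 1) j
      = S.cf w K (j + 1) + S.a j * S.F w K 0 := by
  unfold cf
  rw [Finset.sum_sub_distrib, Finset.sum_comm, Finset.sum_range_succ]
  simp only [← Finset.mul_sum]
  have h : ∀ r, ∑ i ∈ Finset.range S.M, (S.F (ext w K i) (K + 1) r : ℝ) = S.F w K (r + 1) := by
    intro r; rw [F_add]; push_cast; rfl
  simp only [h]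
  have : ∑ x ∈ Finset.range j, (S.a x : ℝ) * (S.F w K (j - 1 - x + 1) : ℝ)
      = ∑ x ∈ Finset.range j, (S.a x : ℝ) * (S.F w K (j + 1 - 1 - x) : ℝ) := by
    refine Finset.sum_congr rfl fun i hi => ?_
    have hi := Finset.mem_range.1 hi
    rw [show j - 1 - i + 1 = j + 1 - 1 - i by omega]
  rw [this, show j + 1 - 1 - j = 0 by omega]
  ring

lemma D_pos (S : NumerationSystem) (β : ℝ) (h : 1 < β) :
    0 < ∑ i ∈ Finset.range S.d, β ^ i :=
  Finset.sum_pos (fun i _ => by positivity) ⟨0, Finset.mem_range.2 S.hd⟩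

lemma mu_eq (S : NumerationSystem) (β : ℝ) (w : ℕ → ℕ) (K : ℕ) :
    S.mu β w K = (∑ j ∈ Finset.range S.d, S.cf w K j * β ^ (S.d - 1 - j)) /
    (β ^ K * ∑ i ∈ Finset.range S.d, β ^ i) := rfl

lemma mu_add (S : NumerationSystem) (β : ℝ) (hβ : S.IsCharRoot β) (w : ℕ → ℕ) (K : ℕ) :
    ∑ i ∈ Finset.range S.M, S.mu β (ext w K i) (K + 1) = S.mu β w K := by
  have h1 := hβ.2.2.1
  have hD := S.D_pos β h1
  simp only [mu_eq]
  rw [← Finset.sum_div, Finset.sum_comm]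
  simp only [← Finset.sum_mul, cf_add]
  rw [div_eq_div_iff (by positivity) (by positivity)]
  have key : ∑ j ∈ Finset.range S.d, (S.cf w K (j + 1) + S.a j * S.F w K 0) * β ^ (S.d - 1 - j)
      = β * ∑ j ∈ Finset.range S.d, S.cf w K j * β ^ (S.d - 1 - j) := by
    have a1 : ∑ j ∈ Finset.range S.d, (S.a j * S.F w K 0 : ℝ) * β ^ (S.d - 1 - j)
        = S.cf w K 0 * β ^ S.d := by
      rw [S.root_eq β hβ, Finset.mul_sum]
      refine Finset.sum_congr rfl fun i _ => ?_
      simp [cf]; ring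
    have a2 : ∑ j ∈ Finset.range S.d, S.cf w K (j + 1) * β ^ (S.d - 1 - j)
        + S.cf w K 0 * β ^ S.d = ∑ j ∈ Finset.range (S.d + 1), S.cf w K j * β ^ (S.d - j) := by
      rw [Finset.sum_range_succ']
      simp only [Nat.sub_zero, add_left_inj]
      refine Finset.sum_congr rfl fun i _ => ?_
      rw [show S.d - 1 - i = S.d - (i + 1) by omega]
    simp only [add_mul]
    rw [Finset.sum_add_distrib, a1, a2, Finset.sum_range_succ, cf_d, zero_mul, add_zero,
      Finset.mul_sum]
    refine Finset.sum_congr rfl fun i hi => ?_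
    have hi := Finset.mem_range.1 hi
    rw [show S.d - i = (S.d - 1 - i) + 1 by omega, pow_succ]
    ring
  rw [key]
  ring

lemma mu_zero (S : NumerationSystem) (β : ℝ) (hβ : S.IsCharRoot β) (w : ℕ → ℕ) :
    S.mu β w 0 = 1 := by
  have hD := S.D_pos β hβ.2.2.1
  have hF : ∀ r, S.F w 0 r = S.G r := by intro r; simp [F]
  have hc : ∀ j, j < S.d → S.cf w 0 j = 1 := by
    intro j hj
    unfold cf
    simp only [hF]
    rcases Nat.eq_zero_or_pos j with h | h
    · subst h; simp [S.hG0]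
    · rw [S.hG_small j h hj]; push_cast; ring
  rw [mu_eq, pow_zero, one_mul, div_eq_one_iff_eq hD.ne']
  rw [← Finset.sum_range_reflect (fun i => β ^ i)]
  refine Finset.sum_congr rfl fun i hi => ?_
  rw [hc i (Finset.mem_range.1 hi), one_mul]

lemma mu_bound (S : NumerationSystem) (β : ℝ) (h1 : 1 < β) :
    ∃ C : ℝ, 0 ≤ C ∧ ∀ w K, |S.mu β w K| ≤ C * (β⁻¹) ^ K := by
  have hD := S.D_pos β h1
  have hβ0 : 0 < β := by linarith
  refine ⟨(∑ j ∈ Finset.range S.d, ((S.M : ℝ) ^ j + ∑ i ∈ Finset.range j,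
    (S.a i : ℝ) * (S.M : ℝ) ^ (j - 1 - i)) * β ^ (S.d - 1 - j)) / ∑ i ∈ Finset.range S.d, β ^ i,
    by positivity, fun w K => ?_⟩
  have hF : ∀ r, |(S.F w K r : ℝ)| ≤ (S.M : ℝ) ^ r := by
    intro r; rw [abs_of_nonneg (by positivity)]; exact_mod_cast S.F_le r w K
  rw [mu_eq, abs_div, abs_of_pos (show 0 < β ^ K * ∑ i ∈ Finset.range S.d, β ^ i by positivity),
    inv_pow, ← div_eq_mul_inv, div_div, mul_comm (β ^ K)]
  gcongr
  refine (Finset.abs_sum_le_sum_abs _ _).trans (Finset.sum_le_sum fun j _ => ?_)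
  rw [abs_mul, abs_of_pos (show 0 < β ^ (S.d - 1 - j) by positivity)]
  gcongr
  unfold cf
  refine (abs_sub _ _).trans (add_le_add (hF j) ?_)
  refine (Finset.abs_sum_le_sum_abs _ _).trans (Finset.sum_le_sum fun i _ => ?_)
  rw [abs_mul, abs_of_nonneg (show (0 : ℝ) ≤ S.a i by positivity)]
  gcongr
  exact hF _

lemma mu_congr (S : NumerationSystem) (β : ℝ) (w w' : ℕ → ℕ) (K : ℕ)
    (h : ∀ i, i < K → w i = w' i) : S.mu β w K = S.mu β w' K := by
  have hF : ∀ r, S.F w K r = S.F w' K r := by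
    intro r
    unfold F
    congr 1
    apply Finset.filter_congr
    intro n _
    refine forall₂_congr fun i hi => ?_
    rw [h i hi]
  unfold mu
  simp only [hF]

/-- terms of psi -/
noncomputable def tm (S : NumerationSystem) (β : ℝ) (x : ℕ → ℕ) (k : ℕ) : ℝ :=
  ∑ i ∈ Finset.range (x k), S.mu β (ext x k i) (k + 1)

lemma tm_congr (S : NumerationSystem) (β : ℝ) (w w' : ℕ → ℕ) (k : ℕ)
    (h : ∀ i, i ≤ k → w i = w' i) : S.tm β w k = S.tm β w' k := by
  unfold tm
  rw [h k le_rfl]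
  refine Finset.sum_congr rfl fun i _ => ?_
  apply mu_congr
  intro j _
  unfold ext
  split_ifs with hj
  · exact h j hj.le
  · rfl

lemma exists_word (S : NumerationSystem) (β : ℝ) (hβ : S.IsCharRoot β) (x : ℝ)
    (hx : x ∈ Set.Ico (0 : ℝ) 1) (K : ℕ) :
    ∃ w : ℕ → ℕ, ∑ k ∈ Finset.range K, S.tm β w k ≤ x ∧
      x < ∑ k ∈ Finset.range K, S.tm β w k + S.mu β w K := by
  induction K with
  | zero => exact ⟨0, by simpa using hx.1, by simpa [S.mu_zero β hβ] using hx.2⟩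
  | succ K ih =>
    obtain ⟨w, h1, h2⟩ := ih
    set L := ∑ k ∈ Finset.range K, S.tm β w k with hL
    rw [← S.mu_add β hβ] at h2
    have hex : ∃ m, x < L + ∑ i ∈ Finset.range m, S.mu β (ext w K i) (K + 1) := ⟨_, h2⟩
    obtain ⟨i, hi1, hi2⟩ : ∃ i, L + ∑ i ∈ Finset.range i, S.mu β (ext w K i) (K + 1) ≤ x ∧
        x < L + ∑ i ∈ Finset.range (i + 1), S.mu β (ext w K i) (K + 1) := by
      have hf := Nat.find_spec hex
      rcases hm : Nat.find hex with _ | i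
      · rw [hm] at hf; simp at hf; linarith
      · rw [hm] at hf
        refine ⟨i, ?_, hf⟩
        have := Nat.find_min hex (m := i) (by omega)
        exact not_lt.1 this
    have e1 : ∑ k ∈ Finset.range K, S.tm β (ext w K i) k = L := by
      refine Finset.sum_congr rfl fun k hk => ?_
      have hk := Finset.mem_range.1 hk
      apply tm_congr
      intro j hj
      simp [ext, show j < K by omega]
    have e2 : S.tm β (ext w K i) K = ∑ i ∈ Finset.range i, S.mu β (ext w K i) (K + 1) := by
      unfold tm
      rw [show ext w K i K = i by simp [ext]]
      refine Finset.sum_congr rfl fun k hk => ?_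
      apply mu_congr
      intro j hj
      simp only [ext]
      split_ifs <;> rfl
    refine ⟨ext w K i, ?_, ?_⟩
    · rw [Finset.sum_range_succ, e1, e2]; exact hi1
    · rw [Finset.sum_range_succ, e1, e2]
      rw [Finset.sum_range_succ] at hi2
      linarith

lemma exists_n (S : NumerationSystem) (β : ℝ) (w : ℕ → ℕ) (K : ℕ) (h : S.mu β w K ≠ 0) :
    ∃ n, ∀ i, i < K → S.dig n i = w i := by
  by_contra hc
  push Not at hc
  apply h
  have hF : ∀ r, S.F w K r = 0 := by
    intro r
    unfold F
    rw [Finset.card_eq_zero, Finset.filter_eq_empty_iff]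
    intro n _ hn
    obtain ⟨i, hi, hne⟩ := hc n
    exact hne (hn i hi)
  unfold mu
  simp [hF]

lemma dense_all (S : NumerationSystem) (β : ℝ) (hβ : S.IsCharRoot β) (x : ℝ)
    (hx : x ∈ Set.Ico (0 : ℝ) 1) : x ∈ closure (Set.range (S.psi β)) := by
  have h1 := hβ.2.2.1
  have hβ0 : 0 < β := by linarith
  obtain ⟨C, hC0, hC⟩ := S.mu_bound β h1
  have hr0 : 0 ≤ β⁻¹ := by positivity
  have hr1 : β⁻¹ < 1 := inv_lt_one_of_one_lt₀ h1
  let g : ℕ → ℝ := fun k => S.M * (C * (β⁻¹) ^ (k + 1))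
  have hg : Summable g := by
    apply Summable.mul_left
    apply Summable.mul_left
    exact (summable_nat_add_iff 1).2 (summable_geometric_of_lt_one hr0 hr1)
  have htm : ∀ n k, ‖S.tm β (S.dig n) k‖ ≤ g k := by
    intro n k
    unfold tm
    refine (norm_sum_le _ _).trans ((Finset.sum_le_sum fun i _ => hC _ _).trans ?_)
    rw [Finset.sum_const, Finset.card_range, nsmul_eq_mul]
    have : (S.dig n k : ℝ) ≤ S.M := by exact_mod_cast (S.dig_lt n k).le
    exact mul_le_mul_of_nonneg_right this (by positivity)
  have hsum : ∀ n, Summable (S.tm β (S.dig n)) := fun n => Summable.of_norm_bounded hg (htm n)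
  have hlim : Filter.Tendsto (fun K => C * (β⁻¹) ^ K + ∑' k, g (k + K)) Filter.atTop (nhds 0) := by
    have := ((tendsto_pow_atTop_nhds_zero_of_lt_one hr0 hr1).const_mul C).add
      (tendsto_sum_nat_add g)
    simpa using this
  rw [Metric.mem_closure_iff]
  intro ε hε
  obtain ⟨K, hK⟩ := (hlim.eventually (gt_mem_nhds hε)).exists
  obtain ⟨w, hw1, hw2⟩ := S.exists_word β hβ x hx K
  have hmu : 0 < S.mu β w K := by linarith
  obtain ⟨n, hn⟩ := S.exists_n β w K hmu.ne'
  refine ⟨S.psi β n, ⟨n, rfl⟩, ?_⟩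
  have hpsi : S.psi β n = ∑' k, S.tm β (S.dig n) k := rfl
  have e1 : ∑ k ∈ Finset.range K, S.tm β (S.dig n) k = ∑ k ∈ Finset.range K, S.tm β w k := by
    refine Finset.sum_congr rfl fun k hk => ?_
    have hk := Finset.mem_range.1 hk
    exact S.tm_congr β _ _ k fun i hi => hn i (by omega)
  have e2 := (hsum n).sum_add_tsum_nat_add K
  rw [← hpsi, e1] at e2
  have e3 : ‖∑' k, S.tm β (S.dig n) (k + K)‖ ≤ ∑' k, g (k + K) :=
    tsum_of_norm_bounded ((summable_nat_add_iff K).2 hg).hasSum fun k => htm n (k + K)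
  rw [Real.norm_eq_abs, abs_le] at e3
  have e4 := (le_abs_self _).trans (hC w K)
  rw [Real.dist_eq, abs_lt]
  have e5 : 0 ≤ C * β⁻¹ ^ K := by positivity
  constructor <;> linarith [e3.1, e3.2]

end NumerationSystem

/-- The image of the positive integers under the extended `β`-adic
Monna map is dense in `[0,1)`. -/
theorem psi_image_dense
    (S : NumerationSystem) (β : ℝ) (hβ : S.IsCharRoot β) :
    ∀ x ∈ Set.Ico (0 : ℝ) 1, x ∈ closure {y : ℝ | ∃ n : ℕ, 0 < n ∧ y = S.psi β n} := by
  set T := {y : ℝ | ∃ n : ℕ, 0 < n ∧ y = S.psi β n} with hT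
  have hins : ∀ x ∈ Set.Ico (0 : ℝ) 1, x ≠ S.psi β 0 → x ∈ closure T := by
    intro x hx hne
    have h := S.dense_all β hβ x hx
    have hsub : Set.range (S.psi β) ⊆ {S.psi β 0} ∪ T := by
      rintro _ ⟨n, rfl⟩
      rcases Nat.eq_zero_or_pos n with h | h
      · left; rw [h]; rfl
      · right; exact ⟨n, h, rfl⟩
    have h2 := closure_mono hsub h
    rw [closure_union, closure_singleton] at h2
    rcases h2 with h2 | h2
    · exact absurd h2 hne
    · exact h2
  intro x hx
  by_cases hne : x = S.psi β 0
  · rw [← closure_closure (s := T)]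
    have hsub : Set.Ioo x 1 ⊆ closure T := fun y hy =>
      hins y ⟨hx.1.trans hy.1.le, hy.2⟩ (by rw [← hne]; exact hy.1.ne')
    apply closure_mono hsub
    rw [closure_Ioo hx.2.ne]
    exact ⟨le_rfl, hx.2.le⟩
  · exact hins x hx hne
end

section
/- In the corner analysis of the β-adic Halton sequence, the quantities c_j^{(i)} (for 1 ≤ i ≤ s and 2 ≤ j ≤ d_i), the constants A_i (1 ≤ i ≤ s), and the common denominator D (the smallest positive rational integer such that all D·c_j^{(i)} and D·A_i are algebraic integers) satisfy |c_j^{(i)}| ≤ C, |A_i| ≤ C and |D| ≤ C, where C is a constant depending only on the s-tuple of numeration systems (G^{(1)},…,G^{(s)}) and not on N or the n_i. Moreover each A_i is a rational number. -/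
open scoped BigOperators
open scoped Classical

namespace CAD
open Polynomial Finset

lemma int_of_eq {x y : ℂ} (h : IsIntegral ℤ x) (e : y = x) : IsIntegral ℤ y := e ▸ h

lemma charPoly_monic (S : NumerationSystem) : S.charPoly.Monic := by
  unfold NumerationSystem.charPoly
  obtain ⟨m, hm⟩ : ∃ m, S.d = m + 1 := ⟨S.d - 1, by have := S.hd; omega⟩
  rw [hm]
  apply monic_X_pow_sub
  refine lt_of_le_of_lt (degree_sum_le _ _) ?_
  rw [Finset.sup_lt_iff (by exact WithBot.bot_lt_coe _)]
  intro i hi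
  refine lt_of_le_of_lt (degree_C_mul_X_pow_le _ _) ?_
  have : m + 1 - 1 - i < m + 1 := by omega
  exact_mod_cast this

lemma G_mono (S : NumerationSystem) (k : ℕ) : S.G k ≤ S.G (k+1) := by
  have h0 := S.ha_pos 0 S.hd
  have hd := S.hd
  by_cases hk : k + 1 < S.d
  · rw [S.hG_small (k+1) (by omega) hk]
    have := Finset.single_le_sum (f := fun i => S.a i * S.G (k + 1 - 1 - i)) (s := range (k+1))
      (fun _ _ => Nat.zero_le _) (a := 0) (by simp)
    simp at this ⊢
    nlinarith
  · obtain ⟨n, hn⟩ : ∃ n, k + 1 = n + S.d := ⟨k + 1 - S.d, by omega⟩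
    rw [hn, S.hG_rec n]
    have := Finset.single_le_sum (f := fun i => S.a i * S.G (n + S.d - 1 - i)) (s := range S.d)
      (fun _ _ => Nat.zero_le _) (a := 0) (by simp; omega)
    have e : n + S.d - 1 - 0 = k := by omega
    simp only [e] at this
    nlinarith

lemma G_monotone (S : NumerationSystem) : Monotone S.G := monotone_nat_of_le_succ (G_mono S)

lemma G_pos (S : NumerationSystem) (k : ℕ) : 1 ≤ S.G k := by
  have := G_monotone S (Nat.zero_le k); rwa [S.hG0] at this

lemma G_le (S : NumerationSystem) (k : ℕ) : S.G (k+1) ≤ (S.d * S.a 0 + 1) * S.G k := by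
  have key : ∀ r m, r ≤ S.d → (∀ i, m - i ≤ m) → m = k →
      ∑ i ∈ range r, S.a i * S.G (m - i) ≤ S.d * S.a 0 * S.G k := by
    intro r m hr _ hm
    subst hm
    calc ∑ i ∈ range r, S.a i * S.G (m - i) ≤ ∑ i ∈ range r, S.a 0 * S.G m := by
          apply Finset.sum_le_sum
          intro i hi
          have := Finset.mem_range.1 hi
          exact Nat.mul_le_mul (S.ha_anti 0 i (by omega) (by omega)) (G_monotone S (by omega))
      _ = r * (S.a 0 * S.G m) := by simp
      _ ≤ S.d * (S.a 0 * S.G m) := Nat.mul_le_mul_right _ hr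
      _ = _ := by ring
  have hp := G_pos S k
  by_cases hk : k + 1 < S.d
  · rw [S.hG_small (k+1) (by omega) hk]
    have := key (k+1) (k+1-1) (by omega) (by intro; omega) (by omega)
    nlinarith
  · have hd := S.hd
    obtain ⟨n, hn⟩ : ∃ n, k + 1 = n + S.d := ⟨k + 1 - S.d, by omega⟩
    rw [hn, S.hG_rec n]
    have := key S.d (n + S.d - 1) le_rfl (by intro; omega) (by omega)
    nlinarith

lemma dig_le (S : NumerationSystem) (n k : ℕ) : S.dig n k ≤ S.d * S.a 0 + 1 := by
  have h1 := S.hdig_reg n (k+1)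
  rw [Finset.sum_range_succ] at h1
  have h2 := G_le S k
  have hp := G_pos S k
  have : S.dig n k * S.G k < (S.d * S.a 0 + 1) * S.G k := by omega
  exact (lt_of_mul_lt_mul_right this (Nat.zero_le _)).le

lemma exists_den (T : Finset ℂ) (hT : ∀ x ∈ T, IsAlgebraic ℤ x) :
    ∃ D : ℕ, 0 < D ∧ ∀ x ∈ T, IsIntegral ℤ ((D : ℂ) * x) := by
  induction T using Finset.induction_on with
  | empty => exact ⟨1, one_pos, by simp⟩
  | insert a T ha ih =>
    obtain ⟨D, hD, h⟩ := ih (fun x hx => hT x (Finset.mem_insert_of_mem hx))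
    obtain ⟨y, hy, hy2⟩ := (hT a (Finset.mem_insert_self _ _)).exists_integral_multiple
    have hy3 : IsIntegral ℤ ((y.natAbs : ℂ) * a) := by
      rcases Int.natAbs_eq y with e | e
      · rw [e] at hy2; simpa using hy2
      · rw [e] at hy2; simpa using hy2.neg
    have hnat : ∀ m : ℕ, IsIntegral ℤ (m : ℂ) := fun m => by
      simpa using (isIntegral_algebraMap (R := ℤ) (A := ℂ) (x := (m : ℤ)))
    refine ⟨D * y.natAbs, by positivity, ?_⟩
    intro x hx
    rcases Finset.mem_insert.1 hx with rfl | hx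
    · have := (hnat D).mul hy3
      push_cast; simpa [mul_assoc] using this
    · have := (hnat y.natAbs).mul (h x hx)
      refine int_of_eq this ?_
      push_cast; ring

variable {S : NumerationSystem} {βc b : ℕ → ℂ}

lemma root_int (hr : S.IsRootData βc b) {j : ℕ} (hj : j < S.d) : IsIntegral ℤ (βc j) :=
  ⟨S.charPoly, charPoly_monic S, by simpa [aeval_def] using hr.1 j hj⟩

/-- `∑ b_j P(β_j) = ∑ P_n G_n`. -/
lemma sum_eval (hr : S.IsRootData βc b) (P : ℂ[X]) :
    ∑ j ∈ range S.d, b j * P.eval (βc j) = ∑ n ∈ range (P.natDegree + 1), P.coeff n * S.G n := by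
  simp_rw [eval_eq_sum_range, hr.2.2, Finset.mul_sum]
  rw [Finset.sum_comm]
  refine Finset.sum_congr rfl fun n _ => Finset.sum_congr rfl fun j _ => by ring

lemma b_alg (hr : S.IsRootData βc b) {j : ℕ} (hj : j < S.d) : IsAlgebraic ℤ (b j) := by
  let K := integralClosure ℚ ℂ
  have hK : ∀ j, j < S.d → βc j ∈ K := fun j hj => (root_int hr hj).tower_top
  let P : K[X] := ∏ l : {l // l ∈ (range S.d).erase j},
    (X - C (⟨βc l, hK l (Finset.mem_range.1 (Finset.mem_of_mem_erase l.2))⟩ : K))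
  have hev : ∀ z : ℂ, (P.map (algebraMap K ℂ)).eval z =
      ∏ l : {l // l ∈ (range S.d).erase j}, (z - βc l) := by
    intro z
    simp only [P, Polynomial.map_prod, eval_prod, Polynomial.map_sub, map_X, map_C, eval_sub, eval_X, eval_C]
    rfl
  have h1 := sum_eval hr (P.map (algebraMap K ℂ))
  rw [Finset.sum_eq_single_of_mem j (by simpa using hj)] at h1
  · have hne : (P.map (algebraMap K ℂ)).eval (βc j) ≠ 0 := by
      rw [hev, Finset.prod_ne_zero_iff]
      rintro ⟨l, hl⟩ _ h0
      simp at hl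
      exact hl.1 (hr.2.1 j l hj hl.2 (sub_eq_zero.1 h0)).symm
    have hb : b j = (∑ n ∈ range ((P.map (algebraMap K ℂ)).natDegree + 1),
        (P.map (algebraMap K ℂ)).coeff n * S.G n) / (P.map (algebraMap K ℂ)).eval (βc j) := by
      rw [← h1]; field_simp
    have hnum : (∑ n ∈ range ((P.map (algebraMap K ℂ)).natDegree + 1),
        (P.map (algebraMap K ℂ)).coeff n * S.G n) ∈ K := by
      refine Subalgebra.sum_mem _ fun n _ => Subalgebra.mul_mem _ ?_ (natCast_mem K _)
      rw [coeff_map]; exact (P.coeff n).2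
    have hden : (P.map (algebraMap K ℂ)).eval (βc j) ∈ K := by
      rw [hev]
      refine Subalgebra.prod_mem _ fun l _ => Subalgebra.sub_mem _ (hK j hj) (hK l ?_)
      exact Finset.mem_range.1 (Finset.mem_of_mem_erase l.2)
    have a1 : IsAlgebraic ℚ (b j) := by
      rw [hb, div_eq_mul_inv]
      exact IsAlgebraic.mul (IsIntegral.isAlgebraic hnum) (IsAlgebraic.inv (IsIntegral.isAlgebraic hden))
    exact (IsFractionRing.isAlgebraic_iff ℤ ℚ ℂ).2 a1
  · intro l hl hlj
    rw [hev, Finset.prod_eq_zero (Finset.mem_univ ⟨l, by simp at hl ⊢; exact ⟨hlj, hl⟩⟩) (by simp)]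
    simp

lemma sum_div_rat (hr : S.IsRootData βc b) {β : ℝ} (hβ : S.IsCharRoot β) (m : ℕ) (hm : m ≠ 0) :
    ∃ q : ℚ, ∑ j ∈ range S.d, b j / (1 - βc j ^ m) = q := by
  have hcop : IsCoprime (S.charPoly.map (Int.castRingHom ℚ)) (1 - X ^ m : ℚ[X]) := by
    rcases EuclideanDomain.dvd_or_coprime _ (1 - X ^ m : ℚ[X]) hβ.1 with h | h
    · exfalso
      obtain ⟨r, hr⟩ := h
      have := congrArg (aeval β) hr
      have h0 : aeval β (S.charPoly.map (Int.castRingHom ℚ)) = 0 := by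
        have := hβ.2.1
        rwa [← aeval_map_algebraMap ℚ] at this
      rw [map_mul, h0] at this
      simp at this
      have h2 := one_lt_pow₀ hβ.2.2.1 hm
      linarith
    · exact h
  obtain ⟨v, u, huv⟩ := hcop
  have hz : ∀ j ∈ range S.d, b j / (1 - βc j ^ m) = b j * (u.map (algebraMap ℚ ℂ)).eval (βc j) := by
    intro j hj
    have h0 : aeval (βc j) (S.charPoly.map (Int.castRingHom ℚ)) = 0 := by
      have := hr.1 j (by simpa using hj)
      rwa [← aeval_map_algebraMap ℚ] at this
    have := congrArg (aeval (βc j)) huv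
    simp only [map_add, map_mul, h0, mul_zero, zero_add, map_sub, map_one, map_pow, aeval_X] at this
    rw [eval_map_algebraMap]
    have hne : (1 - βc j ^ m) ≠ 0 := right_ne_zero_of_mul (this ▸ one_ne_zero)
    rw [div_eq_iff hne, mul_assoc, this, mul_one]
  rw [Finset.sum_congr rfl hz, sum_eval hr]
  refine ⟨∑ n ∈ range ((u.map (algebraMap ℚ ℂ)).natDegree + 1), u.coeff n * S.G n, ?_⟩
  push_cast
  simp

lemma cornerA_rat (hr : S.IsRootData βc b) {β : ℝ} (hβ : S.IsCharRoot β) (k : ℕ) :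
    ∃ q : ℚ, cornerA S βc b k = q := by
  obtain ⟨q1, h1⟩ := sum_div_rat hr hβ 1 one_ne_zero
  obtain ⟨q2, h2⟩ := sum_div_rat hr hβ (k+1) (by omega)
  refine ⟨1 + S.a 0 * q1 - q2, ?_⟩
  unfold cornerA
  rw [h2]
  push_cast
  rw [← h1, Finset.mul_sum]
  simp [mul_div_assoc]

lemma cornerC0_bound {j : ℕ} (hz : ‖βc j‖ < 1) (N n : ℕ) :
    ‖cornerC0 S βc b N n j‖ ≤ ((S.d * S.a 0 + 1 : ℕ) : ℝ) * ‖b j‖ * (1 - ‖βc j‖)⁻¹ := by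
  unfold cornerC0
  refine tsum_of_norm_bounded ((hasSum_geometric_of_lt_one (norm_nonneg _) hz).mul_left _) ?_
  intro m
  rw [norm_mul, norm_mul, norm_pow, Complex.norm_natCast]
  gcongr
  exact_mod_cast dig_le S N _

lemma cornerC0_int (hr : S.IsRootData βc b) {j : ℕ} (hj : j < S.d) (N n : ℕ) (D : ℕ)
    (hD : IsIntegral ℤ ((D : ℂ) * b j)) :
    IsIntegral ℤ ((D : ℂ) * cornerC0 S βc b N n j) := by
  obtain ⟨K, hK, -⟩ := S.hdig_fin N
  unfold cornerC0
  rw [tsum_eq_sum (s := range K) (fun m hm => by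
    rw [hK _ (by simp at hm; omega)]; simp), Finset.mul_sum]
  refine IsIntegral.sum _ fun m _ => ?_
  have hnat : IsIntegral ℤ ((S.dig N (n + m) : ℕ) : ℂ) := by
    simpa using (isIntegral_algebraMap (R := ℤ) (A := ℂ) (x := ((S.dig N (n+m) : ℕ) : ℤ)))
  have := (hnat.mul hD).mul ((root_int hr hj).pow m)
  refine int_of_eq this ?_
  ring

lemma one_sys (S : NumerationSystem) (βc b : ℕ → ℂ) (β : ℝ) (hr : S.IsRootData βc b)
    (hβ : S.IsCharRoot β) (h0 : βc 0 = (β : ℂ)) (k : ℕ) (h : ℕ) (A : ℂ)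
    (hA : A = if h = 0 then 0 else cornerA S βc b k)
    (n : ℕ → ℕ) (c : ℕ → ℕ → ℂ)
    (hc : ∀ j N, c j N = if h = 0 then cornerC0 S βc b N (n N) j
      else cornerC1 S βc b k N (n N) j) :
    (∃ C : ℝ, ∀ N j, 1 ≤ j → j < S.d → ‖c j N‖ ≤ C) ∧
    (∃ q : ℚ, A = q) ∧
    ∃ D : ℕ, 0 < D ∧ (∀ N j, j < S.d → IsIntegral ℤ ((D : ℂ) * c j N)) ∧
      IsIntegral ℤ ((D : ℂ) * A) := by
  have hq : ∃ q : ℚ, A = q := by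
    rw [hA]; split_ifs
    · exact ⟨0, by simp⟩
    · exact cornerA_rat hr hβ k
  refine ⟨?_, hq, ?_⟩
  · let B : ℕ → ℝ := fun j => ((S.d * S.a 0 + 1 : ℕ) : ℝ) * ‖b j‖ * (1 - ‖βc j‖)⁻¹
      + (‖(S.a 0 : ℂ) * b j / (1 - βc j)‖ + ‖b j‖ / ‖1 - βc j ^ (k+1)‖)
    refine ⟨∑ j ∈ range S.d, |B j|, fun N j hj1 hj => ?_⟩
    have hz : ‖βc j‖ < 1 := by
      refine hβ.2.2.2 _ (hr.1 j hj) ?_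
      rw [← h0]
      intro e
      have := hr.2.1 j 0 hj S.hd e
      omega
    have hb := cornerC0_bound (S := S) (b := b) hz N (n N)
    refine le_trans ?_ (Finset.single_le_sum (f := fun j => |B j|) (fun _ _ => abs_nonneg _)
      (Finset.mem_range.2 hj))
    refine le_trans ?_ (le_abs_self _)
    rw [hc]
    split_ifs
    · exact hb.trans (le_add_of_nonneg_right (by positivity))
    · unfold cornerC1
      set e := (n N + k) / (k + 1) * (k + 1) - n N
      have h3 : ‖b j * βc j ^ e / (1 - βc j ^ (k+1))‖ ≤ ‖b j‖ / ‖1 - βc j ^ (k+1)‖ := by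
        rw [norm_div, norm_mul, norm_pow]
        gcongr
        exact mul_le_of_le_one_right (norm_nonneg _) (pow_le_one₀ (norm_nonneg _) hz.le)
      refine (norm_add_le _ _).trans ?_
      have := norm_sub_le (cornerC0 S βc b N (n N) j) ((S.a 0 : ℂ) * b j / (1 - βc j))
      simp only [B]
      linarith
  · have halg : ∀ j, j < S.d → IsAlgebraic ℤ (b j) := fun j hj => b_alg hr hj
    have halg2 : ∀ m j, j < S.d → IsAlgebraic ℤ (b j / (1 - βc j ^ m)) := fun m j hj => by
      rw [div_eq_mul_inv]
      exact (halg j hj).mul ((isAlgebraic_one.sub ((root_int hr hj).isAlgebraic.pow m)).inv)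
    have hAalg : IsAlgebraic ℤ A := by
      obtain ⟨q, rfl⟩ := hq
      exact (IsFractionRing.isAlgebraic_iff ℤ ℚ ℂ).2 (isAlgebraic_algebraMap q)
    obtain ⟨D, hD, hDT⟩ := exists_den
      (insert A ((range S.d).image b ∪ ((range S.d).image (fun j => b j / (1 - βc j ^ 1)) ∪
        (range S.d).image (fun j => b j / (1 - βc j ^ (k+1)))))) (by
        intro x hx
        simp only [Finset.mem_insert, Finset.mem_union, Finset.mem_image, Finset.mem_range] at hx
        rcases hx with rfl | ⟨j, hj, rfl⟩ | ⟨j, hj, rfl⟩ | ⟨j, hj, rfl⟩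
        · exact hAalg
        · exact halg j hj
        · exact halg2 1 j hj
        · exact halg2 (k+1) j hj)
    refine ⟨D, hD, fun N j hj => ?_, hDT A (Finset.mem_insert_self _ _)⟩
    have d0 := cornerC0_int hr hj N (n N) D (hDT _ (by
      apply Finset.mem_insert_of_mem; apply Finset.mem_union_left
      exact Finset.mem_image_of_mem b (Finset.mem_range.2 hj)))
    have d1 := hDT (b j / (1 - βc j ^ 1)) (by
      apply Finset.mem_insert_of_mem; apply Finset.mem_union_right; apply Finset.mem_union_left
      exact Finset.mem_image_of_mem (fun j => b j / (1 - βc j ^ 1)) (Finset.mem_range.2 hj))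
    have d2 := hDT (b j / (1 - βc j ^ (k+1))) (by
      apply Finset.mem_insert_of_mem; apply Finset.mem_union_right; apply Finset.mem_union_right
      exact Finset.mem_image_of_mem (fun j => b j / (1 - βc j ^ (k+1))) (Finset.mem_range.2 hj))
    rw [hc]
    split_ifs
    · exact d0
    · unfold cornerC1
      set e := (n N + k) / (k + 1) * (k + 1) - n N
      have hnat : IsIntegral ℤ ((S.a 0 : ℕ) : ℂ) := by
        simpa using (isIntegral_algebraMap (R := ℤ) (A := ℂ) (x := ((S.a 0 : ℕ) : ℤ)))
      have := (d0.sub (hnat.mul d1)).add (((root_int hr hj).pow e).mul d2)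
      refine int_of_eq this ?_
      rw [pow_one]
      ring

end CAD

/-- The quantities `c_j^{(i)}` (for `j ≠ 1`, i.e. index `1 ≤ j` here),
the constants `A_i` and the common denominator `D` are bounded by a constant depending
only on the tuple of numeration systems; moreover each `A_i` is rational. -/
theorem c_A_D_bounded
    (s : ℕ) (hs : 1 ≤ s) (S : Fin s → NumerationSystem) (β : Fin s → ℝ)
    (hβ : ∀ i, (S i).IsCharRoot (β i))
    (h : Fin s → ℕ) (hh : ∀ i, h i ≤ 1)
    (βc bb : Fin s → ℕ → ℂ) (hroot : ∀ i, (S i).IsRootData (βc i) (bb i))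
    (hβc0 : ∀ i, βc i 0 = (β i : ℂ))
    (kk : Fin s → ℕ) (hkk : ∀ i, (S i).IsPlateau (kk i))
    (A : Fin s → ℂ)
    (hA : ∀ i, A i = if h i = 0 then 0 else cornerA (S i) (βc i) (bb i) (kk i))
    (n : Fin s → ℕ → ℕ)
    (hn0 : ∀ i N, 0 < N → h i = 0 →
      (S i).dig N (n i N) ≠ 0 ∧ ∀ l, l < n i N → (S i).dig N l = 0)
    (hn1 : ∀ i N, 0 < N → h i = 1 →
      (∀ l, l < n i N → (S i).dig N l = maxPattern ((S i).a 0) (kk i) l) ∧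
      (S i).dig N (n i N) ≠ maxPattern ((S i).a 0) (kk i) (n i N))
    (c : Fin s → ℕ → ℕ → ℂ)
    (hc : ∀ i j N, c i j N =
      if h i = 0 then cornerC0 (S i) (βc i) (bb i) N (n i N) j
      else cornerC1 (S i) (βc i) (bb i) (kk i) N (n i N) j) :
    ∃ C : ℝ, 0 < C ∧
      (∀ N : ℕ, 0 < N → ∀ i j, 1 ≤ j → j < (S i).d → ‖c i j N‖ ≤ C) ∧
      (∀ i, ‖A i‖ ≤ C) ∧
      (∀ N : ℕ, 0 < N → ∀ D : ℕ,
        IsLeast {D' : ℕ | 0 < D' ∧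
            (∀ i j, j < (S i).d → IsIntegral ℤ ((D' : ℂ) * c i j N)) ∧
            (∀ i, IsIntegral ℤ ((D' : ℂ) * A i))} D →
        (D : ℝ) ≤ C) ∧
      (∀ i, ∃ q : ℚ, A i = (q : ℂ)) := by
  have H := fun i => CAD.one_sys (S i) (βc i) (bb i) (β i) (hroot i) (hβ i) (hβc0 i) (kk i) (h i)
    (A i) (hA i) (n i) (c i) (hc i)
  choose Hc HA HD using H
  choose C hC using Hc
  choose D hD0 hDc hDA using HD
  have hnat : ∀ m : ℕ, IsIntegral ℤ (m : ℂ) := fun m => by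
    simpa using (isIntegral_algebraMap (R := ℤ) (A := ℂ) (x := (m : ℤ)))
  have hdiv : ∀ i (x : ℂ), IsIntegral ℤ ((D i : ℂ) * x) →
      IsIntegral ℤ (((∏ i, D i : ℕ) : ℂ) * x) := by
    intro i x hx
    obtain ⟨m, hm⟩ := Finset.dvd_prod_of_mem D (Finset.mem_univ i)
    rw [hm]
    refine CAD.int_of_eq ((hnat m).mul hx) ?_
    push_cast; ring
  have hCle : ∀ i, C i ≤ ∑ i, |C i| := fun i => (le_abs_self _).trans
    (Finset.single_le_sum (f := fun i => |C i|) (fun _ _ => abs_nonneg _) (Finset.mem_univ i))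
  have hAle : ∀ i, ‖A i‖ ≤ ∑ i, ‖A i‖ := fun i =>
    (Finset.single_le_sum (f := fun i => ‖A i‖) (fun _ _ => norm_nonneg _) (Finset.mem_univ i))
  have p1 : 0 ≤ ∑ i, |C i| := Finset.sum_nonneg fun _ _ => abs_nonneg _
  have p2 : 0 ≤ ∑ i, ‖A i‖ := Finset.sum_nonneg fun _ _ => norm_nonneg _
  have p3 : (0:ℝ) ≤ ((∏ i, D i : ℕ) : ℝ) := Nat.cast_nonneg _
  refine ⟨1 + ∑ i, |C i| + ∑ i, ‖A i‖ + ((∏ i, D i : ℕ) : ℝ), by linarith, ?_, ?_, ?_, HA⟩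
  · intro N _ i j h1 h2
    linarith [hC i N j h1 h2, hCle i]
  · intro i
    linarith [hAle i]
  · intro N _ E hE
    have := hE.2 (show (∏ i, D i) ∈ _ from ⟨Finset.prod_pos fun i _ => hD0 i,
      fun i j hj => hdiv i _ (hDc i N j hj), fun i => hdiv i _ (hDA i)⟩)
    have h' : (E : ℝ) ≤ ((∏ i, D i : ℕ) : ℝ) := by exact_mod_cast this
    linarith
end

section
/- Let G=(G_n)_{n≥0} be a numeration system with coefficients a_0 ≥ a_1 ≥ … ≥ a_{d−1} ≥ 1 and let C = gcd(a_0, …, a_{d−1}). Then for every positive integer k there exists an integer n_0 such that C^k divides G_n for all n ≥ n_0. -/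
open scoped BigOperators
open scoped Classical

/-- With `C = gcd(a_0,…,a_{d-1})`, for every `k` there is `n_0`
such that `C^k ∣ G_n` for all `n ≥ n_0`. -/
theorem gcd_pow_dvd_G_eventually
    (S : NumerationSystem) (k : ℕ) (hk : 0 < k) :
    ∃ n0 : ℕ, ∀ n, n0 ≤ n → (Finset.gcd (Finset.range S.d) S.a) ^ k ∣ S.G n := by
  clear hk
  induction k with
  | zero => exact ⟨0, fun n _ => by simp⟩
  | succ k ih =>
    obtain ⟨n0, h⟩ := ih
    refine ⟨n0 + S.d, fun n hn => ?_⟩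
    obtain ⟨m, rfl⟩ : ∃ m, n = m + S.d := ⟨n - S.d, by omega⟩
    rw [S.hG_rec m]
    refine Finset.dvd_sum fun i hi => ?_
    rw [pow_succ']
    have hi' := Finset.mem_range.mp hi
    exact mul_dvd_mul (Finset.gcd_dvd hi) (h _ (by omega))
end
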